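/- There is a constant A > 0 such that for all n and all positive integers k ≤ 2 log n, the expected number of chords of length k in the random oriented chord diagram D_n that either over-cross every chord they cross or under-cross every chord they cross differs from 2^{1−k} by at most A·k²/n. Equivalently, with ζ_k(i) the indicator that ⟨i, i+k+1⟩ (indices modulo 2n) is a chord of D_n that over-crosses all its neighbors or under-crosses all its neighbors, ∑_{i=1}^{2n} E[ζ_k(i)] = 2^{1−k} + O(k²/n) uniformly in k ≤ 2 log n. -/

import Mathlib

open scoped Classical
open Finset Filter

/-- A chord diagram of size `n`: a fixed-point-free involution of the `2n`
endpoints `0, 1, …, 2n-1` (endpoint `i` here corresponds to the label `i+1`). -/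
abbrev ChordDiagram (n : ℕ) :=
  {f : Fin (2*n) → Fin (2*n) // (∀ i, f (f i) = i) ∧ ∀ i, f i ≠ i}

/-- `c` lies strictly between `a` and `b`. -/
def Between {m : ℕ} (a b c : Fin m) : Prop := min a b < c ∧ c < max a b

/-- The chord of `C` containing endpoint `x` crosses the chord containing endpoint `u`:
exactly one of the two endpoints `u`, `C u` lies strictly between `x` and `C x`. -/
def Crosses {n : ℕ} (C : ChordDiagram n) (x u : Fin (2*n)) : Prop :=
  Xor' (Between x (C.1 x) u) (Between x (C.1 x) (C.1 u))

/-- Uniform probability of an event over all chord diagrams of size `n`. -/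
noncomputable def prob (n : ℕ) (E : ChordDiagram n → Prop) : ℝ :=
  ((Finset.univ.filter E).card : ℝ) / ((Finset.univ : Finset (ChordDiagram n)).card : ℝ)

/-- The degree of the chord of `C` containing endpoint `x`: the number of chords
crossing it (each chord counted once via its smaller endpoint). -/
noncomputable def chordDegree {n : ℕ} (C : ChordDiagram n) (x : Fin (2*n)) : ℕ :=
  (Finset.univ.filter fun u => u < C.1 u ∧ Crosses C x u).card

/-- The length of the chord of `C` containing endpoint `x`: the number of endpoints
on the smaller of the two arcs it determines. -/
def chordLength {n : ℕ} (C : ChordDiagram n) (x : Fin (2*n)) : ℕ :=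
  min (max (x:ℕ) (C.1 x : ℕ) - min (x:ℕ) (C.1 x : ℕ) - 1)
      (2*n - (max (x:ℕ) (C.1 x : ℕ) - min (x:ℕ) (C.1 x : ℕ)) - 1)

/-- Degree of the chord containing endpoint `1` (index `0`). -/
noncomputable def degreeC1 (n : ℕ) (C : ChordDiagram n) : ℕ :=
  if h : 0 < n then chordDegree C ⟨0, by omega⟩ else 0

/-- Length of the chord containing endpoint `1` (index `0`). -/
noncomputable def lengthC1 (n : ℕ) (C : ChordDiagram n) : ℕ :=
  if h : 0 < n then chordLength C ⟨0, by omega⟩ else 0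

/-- Membership in the component (w.r.t. the crossing relation) of the chord
containing the root endpoint. -/
def InRootComponent {n : ℕ} (C : ChordDiagram n) (root x : Fin (2*n)) : Prop :=
  x = root ∨ x = C.1 root ∨ Relation.ReflTransGen (fun a b => Crosses C a b) root x

/-- The chord containing `x` is simple: it joins two (cyclically) consecutive endpoints. -/
def IsSimple {n : ℕ} (C : ChordDiagram n) (x : Fin (2*n)) : Prop :=
  (C.1 x : ℕ) = ((x : ℕ) + 1) % (2*n) ∨ (x : ℕ) = ((C.1 x : ℕ) + 1) % (2*n)

/-- `C` is monolithic (with respect to `root`): every chord not in the root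
component is simple, and no two simple chords are next to each other. -/
def Monolithic {n : ℕ} (C : ChordDiagram n) (root : Fin (2*n)) : Prop :=
  (∀ x : Fin (2*n), ¬ InRootComponent C root x → IsSimple C x) ∧
  ¬ ∃ i : Fin (2*n), (C.1 i : ℕ) = ((i : ℕ) + 1) % (2*n) ∧
      ∃ j : Fin (2*n), (j : ℕ) = ((i : ℕ) + 2) % (2*n) ∧ (C.1 j : ℕ) = ((i : ℕ) + 3) % (2*n)

/-- `L_j`: the number of chords of length `j` in `C`. -/
noncomputable def lengthCount (n : ℕ) (j : ℕ) (C : ChordDiagram n) : ℕ :=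
  (Finset.univ.filter fun x : Fin (2*n) => x < C.1 x ∧ chordLength C x = j).card

/-- The endpoints of chords of `C` of length at least `k`. -/
noncomputable def lenAtLeast (n k : ℕ) (C : ChordDiagram n) : Finset (Fin (2*n)) :=
  Finset.univ.filter fun x => k ≤ chordLength C x

/-- The number of chords with endpoints in `S` crossing the chord containing `x`. -/
noncomputable def degreeIn {n : ℕ} (C : ChordDiagram n) (S : Finset (Fin (2*n)))
    (x : Fin (2*n)) : ℕ :=
  (S.filter fun u => u < C.1 u ∧ Crosses C x u).card

/-- `S` (a chord-closed set of endpoints) is a set of chords each crossing at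
least `k` other chords of `S`. -/
def IsCore {n : ℕ} (C : ChordDiagram n) (k : ℕ) (S : Finset (Fin (2*n))) : Prop :=
  (∀ x ∈ S, C.1 x ∈ S) ∧ ∀ x ∈ S, k ≤ degreeIn C S x

/-- The `k`-core: the union of all sets of chords in which every chord crosses
at least `k` other chords of the set. -/
noncomputable def kCore (n k : ℕ) (C : ChordDiagram n) : Finset (Fin (2*n)) :=
  Finset.univ.filter fun x => ∃ S : Finset (Fin (2*n)), IsCore C k S ∧ x ∈ S

/-- The number of chords in the `k`-core of `C`. -/
noncomputable def kCoreSize (n k : ℕ) (C : ChordDiagram n) : ℕ :=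
  ((kCore n k C).filter fun x => x < C.1 x).card

/-- `Z_k`: the number of chords of length strictly less than `k`. -/
noncomputable def shortCount (n k : ℕ) (C : ChordDiagram n) : ℕ :=
  (Finset.univ.filter fun x : Fin (2*n) => x < C.1 x ∧ chordLength C x < k).card

/-- `C` contains a balanced clique of size `m`: a set of `m` pairwise crossing
chords with exactly one endpoint in each of the `2m` blocks of length `⌊n/m⌋`. -/
def HasBalancedClique (n m : ℕ) (C : ChordDiagram n) : Prop :=
  ∃ S : Finset (Fin (2*n)),
    (∀ x ∈ S, C.1 x ∈ S) ∧
    (∀ x ∈ S, ∀ u ∈ S, u ≠ x → u ≠ C.1 x → Crosses C x u) ∧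
    (∀ t : ℕ, 1 ≤ t → t ≤ 2*m →
      (S.filter fun x => (t-1) * (n/m) ≤ (x:ℕ) ∧ (x:ℕ) < t * (n/m)).card = 1)

/-- An oriented chord diagram: a chord diagram together with auxiliary fair-coin
bits; the bit attached to a crossing pair of chords (indexed by their smaller
endpoints) decides which chord over-crosses the other. -/
abbrev OrientedChordDiagram (n : ℕ) := ChordDiagram n × (Fin (2*n) → Fin (2*n) → Bool)

/-- The smaller endpoint of the chord of `C` containing `x`. -/
def chordRep {n : ℕ} (C : ChordDiagram n) (x : Fin (2*n)) : Fin (2*n) := min x (C.1 x)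

/-- In the oriented diagram `D`, the chord containing `x` crosses and
over-crosses the chord containing `u`. -/
def OverD {n : ℕ} (D : OrientedChordDiagram n) (x u : Fin (2*n)) : Prop :=
  Crosses D.1 x u ∧
    ((chordRep D.1 x ≤ chordRep D.1 u ∧ D.2 (chordRep D.1 x) (chordRep D.1 u) = true) ∨
     (chordRep D.1 u < chordRep D.1 x ∧ D.2 (chordRep D.1 u) (chordRep D.1 x) = false))

/-- Uniform probability of an event over all oriented chord diagrams of size `n`
(this yields a uniformly random diagram with each crossing oriented by an
independent fair coin). -/
noncomputable def probD (n : ℕ) (E : OrientedChordDiagram n → Prop) : ℝ :=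
  ((Finset.univ.filter E).card : ℝ) /
    ((Finset.univ : Finset (OrientedChordDiagram n)).card : ℝ)

/-- The chords (given by their endpoints in `S`) are strongly connected in the
directed intersection graph of `D`, using only chords of `S`. -/
def StronglyConnectedIn {n : ℕ} (D : OrientedChordDiagram n) (S : Set (Fin (2*n))) : Prop :=
  ∀ c ∈ S, ∀ d ∈ S,
    Relation.ReflTransGen (fun a b => a ∈ S ∧ b ∈ S ∧ OverD D a b) c d

/-- The number of chords with both endpoints in the cyclic block
`{i, i+1, …, i+t-1}` (mod `2n`). -/
noncomputable def chordsInBlock (n : ℕ) (C : ChordDiagram n) (i t : ℕ) : ℕ :=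
  (Finset.univ.filter fun x : Fin (2*n) => x < C.1 x ∧
    (∃ a < t, (x:ℕ) = (i + a) % (2*n)) ∧ (∃ a < t, ((C.1 x : ℕ)) = (i + a) % (2*n))).card

/-- The chord of `x` reaches the chord of `u` in the directed intersection graph
(of the whole diagram); endpoints of the same chord represent the same vertex. -/
def ReachChord {n : ℕ} (D : OrientedChordDiagram n) (x u : Fin (2*n)) : Prop :=
  u = x ∨ u = D.1.1 x ∨ Relation.ReflTransGen (fun a b => OverD D a b) x u

/-- The chords of `x` and `u` lie in the same strong component. -/
def MutualReach {n : ℕ} (D : OrientedChordDiagram n) (x u : Fin (2*n)) : Prop :=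
  ReachChord D x u ∧ ReachChord D u x

/-- The number of single-chord strong components of `D`. -/
noncomputable def singleCount (n : ℕ) (D : OrientedChordDiagram n) : ℕ :=
  (Finset.univ.filter fun x : Fin (2*n) =>
    x < D.1.1 x ∧ ∀ u : Fin (2*n), u ≠ x → u ≠ D.1.1 x → ¬ MutualReach D x u).card

/-!
The endpoints `i` and `j = i + k + 1` are matched with probability `1 / (2n - 1)`, and the chord
`⟨i, j⟩` then cuts off an arc of `k` endpoints. Unless two of these `k` endpoints are matched to
each other, exactly `k` chords cross `⟨i, j⟩`, and the `k` independent coins orienting these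
crossings all favour, or all disfavour, `⟨i, j⟩` with probability `2 ^ (1 - k)`. By a union bound
over the pairs of endpoints in the arc, the exceptional event costs at most
`k ^ 2 / ((2n - 1) (2n - 3))`. Summing over the `2n` choices of `i` gives
`2 ^ (1 - k) * 2n / (2n - 1) + O(k ^ 2 / n)`.

The probabilities of the matchings come from symmetry alone: exchanging the labels of two
endpoints is a bijection on chord diagrams, so that the partner of an endpoint is uniformly
distributed among the endpoints still available.
-/

open scoped BigOperators

section UniformProb

variable {Ω Ω' ι : Type*} [Fintype Ω] [Fintype Ω']

/-- The probability of the event `E` for a uniformly random element of the finite type `Ω`.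
It covers the chord diagrams, the oriented ones (`probD`) and the coin flips `α → Bool`. -/
noncomputable def uniformProb (E : Ω → Prop) : ℝ :=
  #{ω | E ω} / #(univ : Finset Ω)

lemma uniformProb_eq_expect (E : Ω → Prop) :
    uniformProb E = 𝔼 ω, if E ω then (1 : ℝ) else 0 := by
  rw [uniformProb, Fintype.expect_eq_sum_div_card, sum_boole, card_univ]

lemma uniformProb_mem (S : Finset Ω) : uniformProb (· ∈ S) = #S / Fintype.card Ω := by
  simp [uniformProb]

lemma uniformProb_nonneg (E : Ω → Prop) : 0 ≤ uniformProb E := by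
  unfold uniformProb
  positivity

lemma uniformProb_le_one (E : Ω → Prop) : uniformProb E ≤ 1 :=
  div_le_one_of_le₀ (mod_cast card_filter_le _ _) (Nat.cast_nonneg _)

lemma uniformProb_comp_equiv (e : Ω ≃ Ω') (E : Ω' → Prop) :
    uniformProb (fun ω => E (e ω)) = uniformProb E := by
  simp_rw [uniformProb_eq_expect]
  exact Fintype.expect_equiv e _ _ fun _ => rfl

lemma uniformProb_eq_sum_and_eq {E : Ω → Prop} {X : Ω → ι} {S : Finset ι}
    (hX : ∀ ω, E ω → X ω ∈ S) :
    uniformProb E = ∑ a ∈ S, uniformProb fun ω => E ω ∧ X ω = a := by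
  simp only [uniformProb_eq_expect]
  rw [← expect_sum_comm]
  refine expect_congr rfl fun ω _ => ?_
  by_cases hE : E ω <;> simp [hE, hX]

lemma uniformProb_exists_mem_le_sum (S : Finset ι) (E : ι → Ω → Prop) :
    uniformProb (fun ω => ∃ a ∈ S, E a ω) ≤ ∑ a ∈ S, uniformProb (E a) := by
  simp only [uniformProb_eq_expect]
  rw [← expect_sum_comm]
  refine expect_le_expect fun ω _ => ?_
  split_ifs with h
  · obtain ⟨a, ha, hω⟩ := h
    calc (1 : ℝ) = if E a ω then 1 else 0 := (if_pos hω).symm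
      _ ≤ ∑ a ∈ S, if E a ω then 1 else 0 :=
        single_le_sum (f := fun a => if E a ω then (1 : ℝ) else 0)
          (fun _ _ => by positivity) ha
  · positivity

lemma uniformProb_or_of_disjoint {E F : Ω → Prop} (h : ∀ ω, E ω → ¬ F ω) :
    uniformProb (fun ω => E ω ∨ F ω) = uniformProb E + uniformProb F := by
  simp_rw [uniformProb_eq_expect, ← expect_add_distrib]
  refine expect_congr rfl fun ω _ => ?_
  by_cases hE : E ω <;> simp [hE, h]

lemma uniformProb_prod (E : Ω × Ω' → Prop) :
    uniformProb E = 𝔼 ω, uniformProb fun ω' => E (ω, ω') := by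
  simp only [uniformProb_eq_expect]
  rw [← univ_product_univ, expect_product]

lemma abs_uniformProb_prod_sub_le {A B : Ω → Prop} {F : Ω × Ω' → Prop} {c : ℝ}
    (hc₀ : 0 ≤ c) (hc₁ : c ≤ 1)
    (hF : ∀ ω, A ω → ¬ B ω → uniformProb (fun ω' => F (ω, ω')) = c) :
    |uniformProb (fun z : Ω × Ω' => A z.1 ∧ F z) - c * uniformProb A|
      ≤ uniformProb fun ω => A ω ∧ B ω := by
  have hdiff : uniformProb (fun z : Ω × Ω' => A z.1 ∧ F z) - c * uniformProb A =
      𝔼 ω, if A ω then uniformProb (fun ω' => F (ω, ω')) - c else 0 := by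
    rw [uniformProb_prod, uniformProb_eq_expect A, mul_expect, ← expect_sub_distrib]
    refine expect_congr rfl fun ω _ => ?_
    by_cases hA : A ω <;> simp [hA, uniformProb]
  rw [hdiff, uniformProb_eq_expect]
  refine (abs_expect_le _ _).trans (expect_le_expect fun ω _ => ?_)
  by_cases hA : A ω <;> by_cases hB : B ω
  · simpa [hA, hB] using
      abs_sub_le_of_nonneg_of_le (uniformProb_nonneg _) (uniformProb_le_one _) hc₀ hc₁
  all_goals simp [hA, hB, hF]

end UniformProb

section CoinFlips

variable {β : Type*} [Fintype β] [DecidableEq β]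

lemma uniformProb_forall_mem_eq (P : Finset β) (g : β → Bool) :
    uniformProb (fun s : β → Bool => ∀ q ∈ P, s q = g q) = (2 ^ #P)⁻¹ := by
  have hpi : (fun s : β → Bool => ∀ q ∈ P, s q = g q) =
      (· ∈ Fintype.piFinset fun q => if q ∈ P then {g q} else univ) := by
    funext s
    simp only [Fintype.mem_piFinset]
    refine propext (forall_congr' fun q => ?_)
    by_cases hq : q ∈ P <;> simp [hq]
  have hfactor (q : β) :
      (#(if q ∈ P then {g q} else univ) : ℝ) / 2 = if q ∈ P then 2⁻¹ else 1 := by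
    split_ifs <;> simp
  calc uniformProb (fun s : β → Bool => ∀ q ∈ P, s q = g q)
      = ∏ q, (#(if q ∈ P then {g q} else univ) : ℝ) / 2 := by
        rw [hpi, uniformProb_mem, Fintype.card_piFinset, prod_div_distrib, Fintype.card_fun,
          Fintype.card_bool, prod_const, card_univ]
        push_cast
        rfl
    _ = (2 ^ #P)⁻¹ := by
        simp_rw [hfactor, prod_ite_mem, univ_inter, prod_const, inv_pow]

lemma uniformProb_forall_mem_eq_or_forall_mem_eq_not {P : Finset β} (hP : P.Nonempty)
    (g : β → Bool) :
    uniformProb (fun s : β → Bool => (∀ q ∈ P, s q = g q) ∨ ∀ q ∈ P, s q = !g q)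
      = 2 ^ (1 - (#P : ℤ)) := by
  obtain ⟨p, hp⟩ := hP
  have hdisj (s : β → Bool) (h : ∀ q ∈ P, s q = g q) : ¬ ∀ q ∈ P, s q = !g q := fun h' => by
    simpa [h p hp] using h' p hp
  rw [uniformProb_or_of_disjoint hdisj, uniformProb_forall_mem_eq,
    uniformProb_forall_mem_eq P fun q => !g q, ← two_mul, zpow_sub₀ two_ne_zero, zpow_one,
    zpow_natCast, div_eq_mul_inv]

end CoinFlips

namespace ChordDiagram

variable {n : ℕ}

lemma involutive (C : ChordDiagram n) : Function.Involutive C.1 := C.2.1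

instance : Nonempty (ChordDiagram n) :=
  ⟨Fin.rev, Fin.rev_rev, fun i h => by
    have := congrArg Fin.val h
    rw [Fin.val_rev] at this
    omega⟩

/-- Relabelling the endpoints of a chord diagram by the permutation `σ`. These bijections
supply the symmetry from which the law of the partner of an endpoint is computed. -/
def relabel (σ : Equiv.Perm (Fin (2 * n))) : ChordDiagram n ≃ ChordDiagram n :=
  σ.conj.subtypeEquiv fun f => by
    rw [← σ.forall_congr_right (q := fun i => σ.conj f (σ.conj f i) = i),
      ← σ.forall_congr_right (q := fun i => σ.conj f i ≠ i)]
    simp [Equiv.conj_apply]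

lemma relabel_apply_eq_iff (σ : Equiv.Perm (Fin (2 * n))) (C : ChordDiagram n)
    (x y : Fin (2 * n)) : (relabel σ C).1 (σ x) = σ y ↔ C.1 x = y := by
  simp [relabel, Equiv.conj_apply]

lemma relabel_swap_apply_eq_iff {a b x y : Fin (2 * n)} (C : ChordDiagram n)
    (hxa : x ≠ a) (hxb : x ≠ b) (hya : y ≠ a) (hyb : y ≠ b) :
    (relabel (Equiv.swap a b) C).1 x = y ↔ C.1 x = y := by
  have h := relabel_apply_eq_iff (Equiv.swap a b) C x y
  rwa [Equiv.swap_apply_of_ne_of_ne hxa hxb, Equiv.swap_apply_of_ne_of_ne hya hyb] at h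

lemma uniformProb_eq_card_mul_and_apply_eq {E : ChordDiagram n → Prop} {x b : Fin (2 * n)}
    {S : Finset (Fin (2 * n))} (hE : ∀ C, E C → C.1 x ∈ S) (hx : x ∉ S) (hb : b ∈ S)
    (hswap : ∀ a ∈ S, ∀ C, E (relabel (Equiv.swap a b) C) ↔ E C) :
    uniformProb E = #S * uniformProb fun C => E C ∧ C.1 x = b := by
  have hconst : ∀ a ∈ S, uniformProb (fun C => E C ∧ C.1 x = a) =
      uniformProb fun C => E C ∧ C.1 x = b := fun a ha => by
    have hfix : Equiv.swap a b x = x :=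
      Equiv.swap_apply_of_ne_of_ne (ne_of_mem_of_not_mem ha hx).symm
        (ne_of_mem_of_not_mem hb hx).symm
    have hpartner (C : ChordDiagram n) :
        (relabel (Equiv.swap a b) C).1 x = b ↔ C.1 x = a := by
      simpa [hfix] using relabel_apply_eq_iff (Equiv.swap a b) C x a
    rw [← uniformProb_comp_equiv (relabel (Equiv.swap a b)) fun C => E C ∧ C.1 x = b]
    simp_rw [hswap a ha, hpartner]
  rw [uniformProb_eq_sum_and_eq hE, sum_congr rfl hconst, sum_const, nsmul_eq_mul]

lemma uniformProb_apply_eq {i j : Fin (2 * n)} (hij : i ≠ j) :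
    uniformProb (fun C : ChordDiagram n => C.1 i = j) = 1 / (2 * n - 1) := by
  have hcard : (#({i}ᶜ : Finset (Fin (2 * n))) : ℝ) = 2 * n - 1 := by
    rw [card_compl, Nat.cast_sub (card_le_univ _)]
    simp
  have hpos : (0 : ℝ) < #({i}ᶜ : Finset (Fin (2 * n))) :=
    mod_cast card_pos.2 ⟨j, by simpa using hij.symm⟩
  have htotal : uniformProb (fun _ : ChordDiagram n => True) = 1 := by
    simp [uniformProb]
  have hmul := uniformProb_eq_card_mul_and_apply_eq (E := fun _ : ChordDiagram n => True)
    (x := i) (b := j) (S := {i}ᶜ) (fun C _ => by simpa using C.2.2 i) (by simp)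
    (by simpa using hij.symm) (by simp)
  rw [htotal] at hmul
  rw [← hcard, eq_div_iff hpos.ne', hmul, mul_comm]
  simp only [true_and]

lemma uniformProb_apply_eq_and_apply_eq {i j x y : Fin (2 * n)} (hij : i ≠ j) (hxi : x ≠ i)
    (hxj : x ≠ j) (hyi : y ≠ i) (hyj : y ≠ j) (hxy : x ≠ y) :
    uniformProb (fun C : ChordDiagram n => C.1 i = j ∧ C.1 x = y) =
      1 / ((2 * n - 1) * (2 * n - 3)) := by
  set S : Finset (Fin (2 * n)) := {i, j, x}ᶜ with hS
  have hyS : y ∈ S := by simp [hS, hyi, hyj, hxy.symm]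
  have hcard : (#S : ℝ) = 2 * n - 3 := by
    rw [hS, card_compl, Nat.cast_sub (card_le_univ _),
      card_eq_three.2 ⟨i, j, x, hij, hxi.symm, hxj.symm, rfl⟩]
    simp
  have hpos : (0 : ℝ) < #S := mod_cast card_pos.2 ⟨y, hyS⟩
  have hpartner (C : ChordDiagram n) (hC : C.1 i = j) : C.1 x ∈ S := by
    simp only [hS, mem_compl, mem_insert, mem_singleton, not_or]
    refine ⟨fun h => hxj ?_, fun h => hxi ?_, C.2.2 x⟩
    · rw [← hC, ← h, C.involutive]
    · exact C.involutive.injective (h.trans hC.symm)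
  have hswap : ∀ a ∈ S, ∀ C : ChordDiagram n,
      (relabel (Equiv.swap a y) C).1 i = j ↔ C.1 i = j := fun a ha C => by
    simp only [hS, mem_compl, mem_insert, mem_singleton, not_or] at ha
    exact relabel_swap_apply_eq_iff C (Ne.symm ha.1) hyi.symm (Ne.symm ha.2.1) hyj.symm
  have hmul := uniformProb_eq_card_mul_and_apply_eq hpartner (by simp [hS]) hyS hswap
  rw [uniformProb_apply_eq hij] at hmul
  rw [← div_div, ← hcard, hmul, mul_div_cancel_left₀ _ hpos.ne']

/-- Some chord of `C` has both endpoints in `S`: the exceptional event, under which the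
chords emanating from an arc `S` are fewer than `#S`. -/
def HasChordWithin (C : ChordDiagram n) (S : Finset (Fin (2 * n))) : Prop :=
  ∃ u ∈ S, C.1 u ∈ S

lemma apply_eq_and_hasChordWithin_iff {C : ChordDiagram n} {i j : Fin (2 * n)}
    {S : Finset (Fin (2 * n))} :
    C.1 i = j ∧ C.HasChordWithin S ↔ ∃ q ∈ S.offDiag, C.1 i = j ∧ C.1 q.1 = q.2 := by
  constructor
  · rintro ⟨h, u, hu, hv⟩
    exact ⟨(u, C.1 u), mem_offDiag.2 ⟨hu, hv, (C.2.2 u).symm⟩, h, rfl⟩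
  · rintro ⟨q, hq, h, hq'⟩
    obtain ⟨h₁, h₂, -⟩ := mem_offDiag.1 hq
    exact ⟨h, q.1, h₁, hq' ▸ h₂⟩

lemma uniformProb_apply_eq_and_hasChordWithin_le {i j : Fin (2 * n)} (hij : i ≠ j)
    {S : Finset (Fin (2 * n))} (hi : i ∉ S) (hj : j ∉ S) :
    uniformProb (fun C : ChordDiagram n => C.1 i = j ∧ C.HasChordWithin S) ≤
      #S.offDiag / ((2 * n - 1) * (2 * n - 3)) := by
  have hpair : ∀ q ∈ S.offDiag, uniformProb (fun C : ChordDiagram n =>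
      C.1 i = j ∧ C.1 q.1 = q.2) = 1 / ((2 * n - 1) * (2 * n - 3)) := fun q hq => by
    obtain ⟨h₁, h₂, hne⟩ := mem_offDiag.1 hq
    exact uniformProb_apply_eq_and_apply_eq hij (ne_of_mem_of_not_mem h₁ hi)
      (ne_of_mem_of_not_mem h₁ hj) (ne_of_mem_of_not_mem h₂ hi)
      (ne_of_mem_of_not_mem h₂ hj) hne
  simp_rw [apply_eq_and_hasChordWithin_iff]
  refine (uniformProb_exists_mem_le_sum _ _).trans_eq ?_
  rw [sum_congr rfl hpair, sum_const, nsmul_eq_mul, mul_one_div]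

end ChordDiagram

section Arc

variable {m : ℕ} {i j u : Fin m}

/-- The endpoints met strictly between `i` and `j` when going round the circle from `i` in
increasing direction; `sbtw` is the strict betweenness of the cyclic order on `Fin m`. -/
noncomputable def arc (i j : Fin m) : Finset (Fin m) := {u | sbtw i u j}

lemma mem_arc : u ∈ arc i j ↔ sbtw i u j := by simp [arc]

lemma left_notMem_arc : i ∉ arc i j := mem_arc.not.2 sbtw_irrefl_left

lemma right_notMem_arc : j ∉ arc i j := mem_arc.not.2 sbtw_irrefl_right

lemma between_iff_mem_arc (hij : i < j) : Between i j u ↔ u ∈ arc i j := by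
  rw [Between, min_eq_left hij.le, max_eq_right hij.le, mem_arc, Fin.sbtw_iff]
  grind

lemma between_iff_notMem_arc (hji : j < i) (hui : u ≠ i) (huj : u ≠ j) :
    Between i j u ↔ u ∉ arc i j := by
  rw [Between, min_eq_right hji.le, max_eq_left hji.le, mem_arc, Fin.sbtw_iff]
  grind

lemma arc_eq_Ioo (hij : i < j) : arc i j = Ioo i j := by
  ext u
  rw [mem_arc, Fin.sbtw_iff, mem_Ioo]
  grind

lemma arc_eq_compl_Icc (hji : j < i) : arc i j = (Icc j i)ᶜ := by
  ext u
  rw [mem_arc, Fin.sbtw_iff, mem_compl, mem_Icc]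
  grind

lemma card_arc {k : ℕ} (hk : k + 1 < m) (hj : (j : ℕ) = (i + k + 1) % m) : #(arc i j) = k := by
  have hi := i.isLt
  rcases lt_or_ge (i + k + 1 : ℕ) m with hlt | hge
  · rw [Nat.mod_eq_of_lt hlt] at hj
    rw [arc_eq_Ioo (Fin.lt_def.2 (by omega)), Fin.card_Ioo]
    omega
  · rw [Nat.mod_eq_sub_mod hge, Nat.mod_eq_of_lt (by omega)] at hj
    rw [arc_eq_compl_Icc (Fin.lt_def.2 (by omega)), card_compl, Fin.card_Icc, Fintype.card_fin]
    omega

end Arc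

section Crossing

variable {n : ℕ} {C : ChordDiagram n} {i u v : Fin (2 * n)}

lemma crosses_iff_xor_mem_arc :
    Crosses C i u ↔ Xor (u ∈ arc i (C.1 i)) (C.1 u ∈ arc i (C.1 i)) := by
  change Xor (Between i (C.1 i) u) (Between i (C.1 i) (C.1 u)) ↔ _
  rcases lt_or_gt_of_ne (C.2.2 i).symm with hlt | hgt
  · rw [between_iff_mem_arc hlt, between_iff_mem_arc hlt]
  by_cases hu : u = i ∨ u = C.1 i
  · rcases hu with rfl | rfl <;>
      simp [Between, left_notMem_arc, right_notMem_arc, C.involutive _, and_comm]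
  · have hu' : C.1 u ≠ C.1 i ∧ C.1 u ≠ i :=
      ⟨fun h => hu (.inl (C.involutive.injective h)), fun h => hu (.inr (C.involutive.eq_iff.1 h))⟩
    rw [not_or] at hu
    rw [between_iff_notMem_arc hgt hu.1 hu.2, between_iff_notMem_arc hgt hu'.2 hu'.1, xor_not_not]

lemma Crosses.symm (h : Crosses C i u) : Crosses C u i := by
  have hinj : C.1 u = C.1 i ↔ u = i := C.involutive.injective.eq_iff
  have hinv : C.1 u = i ↔ u = C.1 i := C.involutive.eq_iff
  change Xor _ _ at h
  change Xor _ _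
  unfold Between at *
  grind [Xor]

lemma chordRep_apply : chordRep C (C.1 u) = chordRep C u := by
  rw [chordRep, chordRep, C.involutive, min_comm]

lemma eq_or_eq_apply_of_chordRep_eq (h : chordRep C u = chordRep C v) : u = v ∨ u = C.1 v := by
  have huv := C.involutive.eq_iff (x := u) (y := v)
  have hinj := C.involutive.injective (a₁ := u) (a₂ := v)
  grind [chordRep]

lemma Crosses.chordRep_ne (h : Crosses C i u) : chordRep C i ≠ chordRep C u := fun hrep => by
  rw [crosses_iff_xor_mem_arc] at h
  rcases eq_or_eq_apply_of_chordRep_eq hrep.symm with rfl | rfl <;>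
    simp [C.involutive _, left_notMem_arc, right_notMem_arc] at h

lemma forall_crosses_iff_forall_mem_arc {R : Fin (2 * n) → Prop}
    (hR : ∀ u, R (C.1 u) ↔ R u) (hC : ¬ C.HasChordWithin (arc i (C.1 i))) :
    (∀ u, Crosses C i u → R u) ↔ ∀ u ∈ arc i (C.1 i), R u := by
  refine ⟨fun h u hu => h u ?_, fun h u hu => ?_⟩
  · exact crosses_iff_xor_mem_arc.2 (Or.inl ⟨hu, fun hu' => hC ⟨u, hu, hu'⟩⟩)
  · rcases crosses_iff_xor_mem_arc.1 hu with ⟨hmem, -⟩ | ⟨hmem, -⟩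
    · exact h u hmem
    · exact (hR u).1 (h _ hmem)

end Crossing

section Orientation

variable {n : ℕ} {C : ChordDiagram n} {D : OrientedChordDiagram n} {i u v : Fin (2 * n)}

/-- The index of the coin that orients the crossing of the chords through `i` and `u`. -/
def coinIndex (C : ChordDiagram n) (i u : Fin (2 * n)) : Fin (2 * n) × Fin (2 * n) :=
  (min (chordRep C i) (chordRep C u), max (chordRep C i) (chordRep C u))

lemma coinIndex_apply_right : coinIndex C i (C.1 u) = coinIndex C i u := by
  rw [coinIndex, coinIndex, chordRep_apply]

lemma chordRep_eq_of_coinIndex_eq (h : coinIndex C i u = coinIndex C i v) :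
    chordRep C u = chordRep C v := by
  simp only [coinIndex, Prod.mk.injEq] at h
  grind

lemma injOn_coinIndex {S : Finset (Fin (2 * n))} (hS : ¬ C.HasChordWithin S) :
    Set.InjOn (coinIndex C i) S := fun _ hu v hv huv =>
  (eq_or_eq_apply_of_chordRep_eq (chordRep_eq_of_coinIndex_eq huv)).resolve_right
    fun h => hS ⟨v, hv, h ▸ hu⟩

lemma overD_iff_coin_eq (h : Crosses D.1 i u) :
    OverD D i u ↔ Function.uncurry D.2 (coinIndex D.1 i u) =
      decide ((coinIndex D.1 i u).1 = chordRep D.1 i) := by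
  rcases lt_or_gt_of_ne h.chordRep_ne with hlt | hgt
  · simp [OverD, coinIndex, h, hlt.le, hlt.not_gt]
  · simp [OverD, coinIndex, h, hgt, hgt.le, hgt.not_ge, hgt.ne]

lemma overD_symm_iff_not_overD (h : Crosses D.1 i u) : OverD D u i ↔ ¬ OverD D i u := by
  rcases lt_or_gt_of_ne h.chordRep_ne with hlt | hgt
  · simp [OverD, h, h.symm, hlt, hlt.le, hlt.not_gt, hlt.not_ge]
  · simp [OverD, h, h.symm, hgt, hgt.le, hgt.not_gt, hgt.not_ge]

lemma underD_iff_coin_eq (h : Crosses D.1 i u) :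
    OverD D u i ↔ Function.uncurry D.2 (coinIndex D.1 i u) =
      !decide ((coinIndex D.1 i u).1 = chordRep D.1 i) := by
  rw [overD_symm_iff_not_overD h, overD_iff_coin_eq h, Bool.eq_not]

/-- The chord through `i` over-crosses all its neighbors or under-crosses all of them: the
event whose indicator, for a chord `⟨i, i+k+1⟩`, is `ζ_k(i)`. -/
def OverOrUnderAll (D : OrientedChordDiagram n) (i : Fin (2 * n)) : Prop :=
  (∀ u, Crosses D.1 i u → OverD D i u) ∨ ∀ u, Crosses D.1 i u → OverD D u i

lemma overOrUnderAll_iff_coins_eq (hD : ¬ D.1.HasChordWithin (arc i (D.1.1 i))) :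
    OverOrUnderAll D i ↔
      (∀ q ∈ (arc i (D.1.1 i)).image (coinIndex D.1 i),
        Function.uncurry D.2 q = decide (q.1 = chordRep D.1 i)) ∨
      ∀ q ∈ (arc i (D.1.1 i)).image (coinIndex D.1 i),
        Function.uncurry D.2 q = !decide (q.1 = chordRep D.1 i) := by
  rw [forall_mem_image, forall_mem_image,
    ← forall_crosses_iff_forall_mem_arc (fun u => by rw [coinIndex_apply_right]) hD,
    ← forall_crosses_iff_forall_mem_arc (fun u => by rw [coinIndex_apply_right]) hD]
  exact or_congr (forall₂_congr fun _ => overD_iff_coin_eq)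
    (forall₂_congr fun _ => underD_iff_coin_eq)

lemma uniformProb_overOrUnderAll (hne : (arc i (C.1 i)).Nonempty)
    (hC : ¬ C.HasChordWithin (arc i (C.1 i))) :
    uniformProb (fun s => OverOrUnderAll (C, s) i) = 2 ^ (1 - (#(arc i (C.1 i)) : ℤ)) := by
  simp_rw [overOrUnderAll_iff_coins_eq (D := (C, _)) hC]
  rw [← card_image_of_injOn (injOn_coinIndex (i := i) hC),
    ← uniformProb_forall_mem_eq_or_forall_mem_eq_not (hne.image _)
      fun q => decide (q.1 = chordRep C i)]
  exact (uniformProb_comp_equiv (Equiv.curry _ _ _) _).symm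

lemma probD_eq_uniformProb (E : OrientedChordDiagram n → Prop) : probD n E = uniformProb E := rfl

lemma abs_probD_apply_eq_and_overOrUnderAll_sub_le {j : Fin (2 * n)} (hij : i ≠ j)
    (hne : (arc i j).Nonempty) :
    |probD n (fun D => D.1.1 i = j ∧ OverOrUnderAll D i)
        - 2 ^ (1 - (#(arc i j) : ℤ)) / (2 * n - 1)| ≤
      #(arc i j).offDiag / ((2 * n - 1) * (2 * n - 3)) := by
  have hle_one : (2 : ℝ) ^ (1 - (#(arc i j) : ℤ)) ≤ 1 :=
    zpow_le_one_of_nonpos₀ one_le_two (by have := hne.card_pos; omega)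
  have hcond (C : ChordDiagram n) (hCi : C.1 i = j) (hC : ¬ C.HasChordWithin (arc i j)) :
      uniformProb (fun s => OverOrUnderAll (C, s) i) = 2 ^ (1 - (#(arc i j) : ℤ)) := by
    subst hCi
    exact uniformProb_overOrUnderAll hne hC
  have habs := abs_uniformProb_prod_sub_le (A := fun C : ChordDiagram n => C.1 i = j)
    (B := fun C => C.HasChordWithin (arc i j))
    (F := fun D : OrientedChordDiagram n => OverOrUnderAll D i) (by positivity) hle_one hcond
  rw [ChordDiagram.uniformProb_apply_eq hij, mul_one_div] at habs
  rw [probD_eq_uniformProb]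
  exact habs.trans (ChordDiagram.uniformProb_apply_eq_and_hasChordWithin_le hij left_notMem_arc
    right_notMem_arc)

end Orientation

section Asymptotics

lemma abs_two_mul_mul_div_sub_le {x y c : ℝ} (hx : 2 ≤ x) (hy : 1 ≤ y) (hc₀ : 0 ≤ c)
    (hc₁ : c ≤ 1) :
    |2 * x * (c / (2 * x - 1)) - c| ≤ y / x := by
  have hpos : 0 < 2 * x - 1 := by linarith
  have heq : 2 * x * (c / (2 * x - 1)) - c = c / (2 * x - 1) := by
    field_simp
    ring
  rw [heq, abs_of_nonneg (by positivity)]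
  exact div_le_div₀ (by linarith) (by linarith) (by linarith) (by linarith)

lemma two_mul_mul_div_le {x y : ℝ} (hx : 2 ≤ x) (hy : 0 ≤ y) :
    2 * x * (y / ((2 * x - 1) * (2 * x - 3))) ≤ 3 * (y / x) := by
  have hpos : 0 < (2 * x - 1) * (2 * x - 3) := mul_pos (by linarith) (by linarith)
  rw [← mul_div_assoc, ← mul_div_assoc, div_le_div_iff₀ hpos (by linarith)]
  have hquad : 2 * x * x ≤ 3 * ((2 * x - 1) * (2 * x - 3)) := by nlinarith
  linear_combination y * hquad

lemma add_one_lt_two_mul_of_le_two_mul_log {n k : ℕ} (hk : 1 ≤ k)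
    (hlog : (k : ℝ) ≤ 2 * Real.log n) : k + 1 < 2 * n := by
  have hn : 1 < n := by
    by_contra! h
    interval_cases n <;> norm_num at hlog <;> omega
  have hlt := Real.log_lt_sub_one_of_pos (x := n) (by positivity) (mod_cast hn.ne')
  have hcast : (k : ℝ) + 1 < 2 * n := by linarith
  exact_mod_cast hcast

end Asymptotics

lemma abs_probD_apply_eq_mod_and_overOrUnderAll_sub_le {n k : ℕ} (hk : 1 ≤ k) (hkn : k + 1 < 2 * n)
    (i : Fin (2 * n)) :
    |probD n (fun D => (D.1.1 i : ℕ) = ((i : ℕ) + k + 1) % (2 * n) ∧ OverOrUnderAll D i)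
        - 2 ^ (1 - (k : ℤ)) / (2 * n - 1)| ≤ (k : ℝ) ^ 2 / ((2 * n - 1) * (2 * n - 3)) := by
  obtain ⟨j, hj⟩ : ∃ j : Fin (2 * n), (j : ℕ) = ((i : ℕ) + k + 1) % (2 * n) :=
    ⟨⟨_, Nat.mod_lt _ (by omega)⟩, rfl⟩
  have hcard : #(arc i j) = k := card_arc hkn hj
  have hne : (arc i j).Nonempty := card_pos.1 (by omega)
  have hij : i ≠ j := by
    rintro rfl
    obtain ⟨u, hu⟩ := hne
    exact sbtw_irrefl_left_right (mem_arc.1 hu)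
  have hpairs : (#(arc i j).offDiag : ℝ) ≤ (k : ℝ) ^ 2 := by
    rw [offDiag_card, hcard, sq]
    exact_mod_cast Nat.sub_le _ _
  have hpos : (0 : ℝ) ≤ (2 * n - 1) * (2 * n - 3) := by
    have hn : (2 : ℝ) ≤ n := mod_cast (by omega : 2 ≤ n)
    exact mul_nonneg (by linarith) (by linarith)
  refine le_trans ?_ (div_le_div_of_nonneg_right hpairs hpos)
  simpa only [hcard, Fin.ext_iff, hj] using abs_probD_apply_eq_and_overOrUnderAll_sub_le hij hne

theorem stmt15_general {n k : ℕ} (hk : 1 ≤ k) (hkn : k + 1 < 2 * n) :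
    |(∑ i : Fin (2 * n), probD n (fun D =>
        ((D.1.1 i : ℕ) = ((i : ℕ) + k + 1) % (2 * n)) ∧
        ((∀ u, Crosses D.1 i u → OverD D i u) ∨ (∀ u, Crosses D.1 i u → OverD D u i))))
      - (2 : ℝ) ^ (1 - (k : ℤ))| ≤ 4 * (k : ℝ) ^ 2 / n := by
  set p : Fin (2 * n) → ℝ := fun i => probD n fun D =>
    (D.1.1 i : ℕ) = ((i : ℕ) + k + 1) % (2 * n) ∧ OverOrUnderAll D i
  change |∑ i, p i - _| ≤ _
  set c : ℝ := 2 ^ (1 - (k : ℤ))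
  have hn : (2 : ℝ) ≤ n := mod_cast (by omega : 2 ≤ n)
  have hk' : (1 : ℝ) ≤ (k : ℝ) ^ 2 := one_le_pow₀ (mod_cast hk)
  have hc : c ≤ 1 := zpow_le_one_of_nonpos₀ one_le_two (by omega)
  have hsum : |∑ i, p i - 2 * n * (c / (2 * n - 1))| ≤
      2 * n * ((k : ℝ) ^ 2 / ((2 * n - 1) * (2 * n - 3))) := by
    simpa [dist_eq_norm] using dist_sum_sum_le_of_le univ (f := p) (fun i _ =>
      abs_probD_apply_eq_mod_and_overOrUnderAll_sub_le hk hkn i)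
  calc |∑ i, p i - c|
      ≤ |∑ i, p i - 2 * n * (c / (2 * n - 1))| + |2 * n * (c / (2 * n - 1)) - c| :=
        abs_sub_le _ _ _
    _ ≤ 3 * ((k : ℝ) ^ 2 / n) + (k : ℝ) ^ 2 / n :=
        add_le_add (hsum.trans (two_mul_mul_div_le hn (by positivity)))
          (abs_two_mul_mul_div_sub_le hn hk' (by positivity) hc)
    _ = 4 * (k : ℝ) ^ 2 / n := by ring

theorem stmt15 :
    ∃ A : ℝ, 0 < A ∧ ∀ n k : ℕ, 1 ≤ k → (k : ℝ) ≤ 2 * Real.log n →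
      |(∑ i : Fin (2*n), probD n (fun D =>
          ((D.1.1 i : ℕ) = ((i : ℕ) + k + 1) % (2*n)) ∧
          ((∀ u, Crosses D.1 i u → OverD D i u) ∨ (∀ u, Crosses D.1 i u → OverD D u i))))
        - (2:ℝ) ^ (1 - (k:ℤ))| ≤ A * (k:ℝ)^2 / (n:ℝ) := by
  exact ⟨4, four_pos, fun n k hk hlog =>
    stmt15_general hk (add_one_lt_two_mul_of_le_two_mul_log hk hlog)⟩
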